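/- (4/9)·Re Li₃((1+i)/4) − Re Li₃(−i/2) = (7/24)·ζ(3) + (log³2)/12 − (5 π² log 2)/144. -/

import Mathlib

/-! The ladder is Kummer's trilogarithm equation at the points `I` and `1 - s`, evaluated at
`s = 1 / 2`. For `s ∈ [0, 1/2]` its five arguments `-s² / (2(1 - s))`, `I (1 - s)`, `(1 + I) s / 2`,
`(I - 1) s / (2(1 - s))` and `1 - s` stay in the closed unit disc and each runs along a fixed ray, so
that the real part of `Li (n + 1)` differentiates to the real part of `Li n` times a rational
function of `s`. The derivative of the trilogarithm combination (`trilog_eq`) is therefore a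
combination of dilogarithm ones (`dilog_eq_one`, `dilog_eq_two`), whose derivatives vanish because
the numbers `‖1 - z‖²` for the five arguments `z` factor into `1 + (1 - s)²`, `1 - s`, `s` and `2`.
The constants of integration come from `s = 0`, where only `Li n 1` and `Re (Li n I)` survive.

At `s = 1 / 2` the duplication equation `Li_dup` leaves `Re Li₃((1+i)/4)` and `Re Li₃(-i/2)` together
with `Li₃(1/2)` and `Re Li₃((1+i)/2)`. These last two follow from Landen's three-term equation
`trilog_landen`, proved by differentiation along the segment `1 - s a` with `Re a = 1/2`, for
`a = 1/2` and `a = (1 - i)/2`. -/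

open Complex

/-- The polylogarithm `Li n z = ∑_{k ≥ 1} z^k / k^n`. -/
noncomputable def Li (n : ℕ) (z : ℂ) : ℂ := ∑' k : ℕ, z ^ (k + 1) / ((k + 1 : ℕ) : ℂ) ^ n

/-- `ζ(3) = ∑_{k ≥ 1} 1/k³`. -/
noncomputable def zeta3 : ℝ := ∑' k : ℕ, (1 : ℝ) / ((k + 1 : ℕ) : ℝ) ^ 3

open Filter Topology Set

/-! ### The polylogarithm on the closed unit disc -/

lemma term_norm_le (n : ℕ) {z : ℂ} (hz : ‖z‖ ≤ 1) (k : ℕ) :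
    ‖z ^ (k + 1) / ((k + 1 : ℕ) : ℂ) ^ n‖ ≤ 1 / ((k + 1 : ℕ) : ℝ) ^ n := by
  rw [norm_div, norm_pow, norm_pow, Complex.norm_natCast]
  gcongr
  exact pow_le_one₀ (norm_nonneg _) hz

lemma summable_bound {n : ℕ} (hn : 2 ≤ n) :
    Summable fun k : ℕ => 1 / ((k + 1 : ℕ) : ℝ) ^ n :=
  (summable_nat_add_iff 1).2 (Real.summable_one_div_nat_pow.2 (by omega))

lemma Li_summable {n : ℕ} (hn : 2 ≤ n) {z : ℂ} (hz : ‖z‖ ≤ 1) :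
    Summable fun k : ℕ => z ^ (k + 1) / ((k + 1 : ℕ) : ℂ) ^ n :=
  Summable.of_norm_bounded (summable_bound hn) (term_norm_le n hz)

lemma Li_continuousOn {n : ℕ} (hn : 2 ≤ n) :
    ContinuousOn (Li n) (Metric.closedBall 0 1) := by
  refine continuousOn_tsum (fun k => by fun_prop) (summable_bound hn) fun k z hz => ?_
  exact term_norm_le n (by simpa using hz) k

lemma Li_hasDerivAt (n : ℕ) {z : ℂ} (hz : ‖z‖ < 1) (h0 : z ≠ 0) :
    HasDerivAt (Li (n + 1)) (Li n z / z) z := by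
  obtain ⟨r, hr, hr1⟩ := exists_between hz
  have hr0 : 0 ≤ r := (norm_nonneg z).trans hr.le
  have key := hasDerivAt_tsum_of_isPreconnected (𝕜 := ℂ) (F := ℂ)
    (g := fun (k : ℕ) z => z ^ (k + 1) / ((k + 1 : ℕ) : ℂ) ^ (n + 1))
    (g' := fun (k : ℕ) z => z ^ k / ((k + 1 : ℕ) : ℂ) ^ n)
    (u := fun k : ℕ => r ^ k) (t := Metric.ball 0 r) (y₀ := 0) (y := z)
    (summable_geometric_of_lt_one hr0 hr1) Metric.isOpen_ball
    (convex_ball 0 r).isPreconnected ?_ ?_ ?_ ?_ ?_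
  · refine HasDerivAt.congr_deriv (f := Li (n + 1)) key ?_
    rw [Li, ← tsum_div_const]
    refine tsum_congr fun k => ?_
    have : ((k + 1 : ℕ) : ℂ) ≠ 0 := Nat.cast_ne_zero.2 (by omega)
    field_simp
    ring
  · intro k y _
    have h := ((hasDerivAt_id y).pow (k + 1)).div_const (((k + 1 : ℕ) : ℂ) ^ (n + 1))
    refine h.congr_deriv ?_
    have : ((k + 1 : ℕ) : ℂ) ≠ 0 := Nat.cast_ne_zero.2 (by omega)
    simp only [id, Nat.add_sub_cancel]
    field_simp
    ring
  · intro k y hy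
    have hy' : ‖y‖ ≤ r := by simpa using (Metric.mem_ball.1 hy).le
    have h1 : (1 : ℝ) ≤ ((k + 1 : ℕ) : ℝ) ^ n :=
      one_le_pow₀ (by exact_mod_cast Nat.succ_le_succ (Nat.zero_le k))
    rw [norm_div, norm_pow, norm_pow, Complex.norm_natCast]
    calc ‖y‖ ^ k / ((k + 1 : ℕ) : ℝ) ^ n ≤ ‖y‖ ^ k := div_le_self (by positivity) h1
      _ ≤ r ^ k := by gcongr
  · simpa using lt_of_le_of_lt (norm_nonneg z) hr
  · simp
  · simpa using hr

lemma Li_one {z : ℂ} (hz : ‖z‖ < 1) : Li 1 z = -Complex.log (1 - z) := by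
  have h := (hasSum_nat_add_iff' 1).2 (Complex.hasSum_taylorSeries_neg_log hz)
  simpa [Li] using h.tsum_eq

/-- In the indexing of `Li`, the terms with odd index `2 * k + 1` carry the even powers of `z`. -/
lemma tsum_eq_tsum_odd {f : ℕ → ℂ} (hs : Summable f) (he : ∀ k, f (2 * k) = 0) :
    ∑' k, f k = ∑' k, f (2 * k + 1) := by
  have h1 : Summable fun k : ℕ => f (2 * k) :=
    hs.comp_injective (i := fun k => 2 * k) fun a b h => by simpa using h
  have h2 : Summable fun k : ℕ => f (2 * k + 1) :=
    hs.comp_injective (i := fun k => 2 * k + 1) fun a b h => by simpa using h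
  rw [← tsum_even_add_odd h1 h2]
  simp [he]

/-- Duplication equation: the odd powers of `z` cancel. -/
lemma Li_dup {n : ℕ} (hn : 2 ≤ n) {z : ℂ} (hz : ‖z‖ ≤ 1) :
    Li n z + Li n (-z) = 2 / 2 ^ n * Li n (z ^ 2) := by
  have hz' : ‖-z‖ ≤ 1 := by simpa using hz
  have hs := (Li_summable hn hz).add (Li_summable hn hz')
  have key : Li n z + Li n (-z) = _ :=
    ((Li_summable hn hz).tsum_add (Li_summable hn hz')).symm
  rw [key, Li, ← tsum_mul_left, tsum_eq_tsum_odd hs]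
  · refine tsum_congr fun k => ?_
    have e1 : (-z) ^ (2 * k + 1 + 1) = z ^ (2 * k + 1 + 1) := Even.neg_pow ⟨k + 1, by ring⟩ z
    have e2 : ((2 * k + 1 + 1 : ℕ) : ℂ) = 2 * ((k + 1 : ℕ) : ℂ) := by push_cast; ring
    have e3 : (z ^ 2) ^ (k + 1) = z ^ (2 * k + 1 + 1) := by rw [← pow_mul]; congr 1
    rw [e1, e2, e3, mul_pow]
    generalize z ^ (2 * k + 1 + 1) = w
    generalize ((k + 1 : ℕ) : ℂ) ^ n = v
    rw [← add_div, div_mul_div_comm, ← two_mul]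
  · intro k
    rw [(odd_two_mul_add_one k).neg_pow]
    ring

lemma Li_conj_re (n : ℕ) (z : ℂ) : (Li n (starRingEnd ℂ z)).re = (Li n z).re := by
  have : Li n (starRingEnd ℂ z) = starRingEnd ℂ (Li n z) := by
    rw [Li, Li, Complex.conj_tsum]
    exact tsum_congr fun k => by simp
  rw [this, Complex.conj_re]

lemma Li_three_one : Li 3 1 = zeta3 := by
  rw [Li, zeta3, Complex.ofReal_tsum]
  exact tsum_congr fun k => by push_cast; simp

lemma Li_two_one : Li 2 1 = (Real.pi : ℂ) ^ 2 / 6 := by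
  have h := (hasSum_nat_add_iff' 1).2 (hasSum_zeta_two)
  have h' := Complex.ofRealCLM.hasSum h
  rw [Li]
  refine (tsum_congr fun k => ?_).trans (h'.tsum_eq.trans ?_)
  · simp
  · simp

lemma Li_at_zero (n : ℕ) : Li n 0 = 0 := by
  simp [Li]

lemma Li_comp_hasDerivAt (n : ℕ) {g : ℝ → ℂ} {g' : ℂ} {s : ℝ} (hg : HasDerivAt g g' s)
    (h1 : ‖g s‖ < 1) (h0 : g s ≠ 0) :
    HasDerivAt (fun s => Li (n + 1) (g s)) (Li n (g s) * (g' / g s)) s := by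
  refine ((Li_hasDerivAt n h1 h0).comp_of_eq s hg rfl).congr_deriv ?_
  field_simp

/-- Along a ray `r ↦ c * r` the real part of `Li (n + 1)` only involves the real part of `Li n`. -/
lemma Li_ray_hasDerivAt (n : ℕ) {c : ℂ} {r : ℝ → ℝ} {r' s : ℝ} (hr : HasDerivAt r r' s)
    (hc : c ≠ 0) (h0 : r s ≠ 0) (h1 : ‖c * r s‖ < 1) :
    HasDerivAt (fun s => (Li (n + 1) (c * r s)).re) ((Li n (c * r s)).re * (r' / r s)) s := by
  have h := Li_comp_hasDerivAt n (g := fun s => c * r s) (hr.ofReal_comp.const_mul c) h1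
    (mul_ne_zero hc (by exact_mod_cast h0))
  refine (Complex.reCLM.hasFDerivAt.comp_hasDerivAt s h).congr_deriv ?_
  have : c * (r' : ℂ) / (c * (r s : ℂ)) = ((r' / r s : ℝ) : ℂ) := by
    rw [mul_div_mul_left _ _ hc]; push_cast; rfl
  simp only [this, Complex.reCLM_apply, Complex.re_mul_ofReal]

lemma Li_one_re {z : ℂ} (hz : ‖z‖ < 1) :
    (Li 1 z).re = -(Real.log (Complex.normSq (1 - z)) / 2) := by
  rw [Li_one hz, Complex.neg_re, Complex.log_re, Complex.norm_def, Real.log_sqrt (Complex.normSq_nonneg _)]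

/-- The form in which every functional equation is proved: continuity up to the endpoints lets the
constant be read off at `0` even though the summands are singular or non-differentiable there. -/
lemma eq_of_deriv_zero {E : Type*} [NormedAddCommGroup E] [NormedSpace ℝ E] {b : ℝ} (hb : 0 < b)
    {f : ℝ → E} (hc : ContinuousOn f (Icc 0 b)) (hd : ∀ s ∈ Ioo 0 b, HasDerivAt f 0 s) :
    ∀ s ∈ Icc 0 b, f s = f 0 := by
  have h1 : ∀ s ∈ Ioo 0 b, f s = f (b / 2) := fun s hs =>
    isOpen_Ioo.is_const_of_deriv_eq_zero isPreconnected_Ioo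
      (fun x hx => (hd x hx).differentiableAt.differentiableWithinAt)
      (fun x hx => (hd x hx).deriv) hs ⟨by linarith, by linarith⟩
  have h2 : EqOn f (fun _ => f (b / 2)) (Icc 0 b) :=
    EqOn.of_subset_closure (s := Ioo 0 b) h1 hc continuousOn_const Ioo_subset_Icc_self
      (closure_Ioo hb.ne).ge
  intro s hs
  rw [h2 hs, h2 ⟨le_rfl, hb.le⟩]

/-- A simple zero of `g` kills the logarithmic singularity. -/
lemma log_smul_continuousAt {E : Type*} [NormedAddCommGroup E] [NormedSpace ℝ E] {g : ℝ → E}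
    (hg : DifferentiableAt ℝ g 0) (h0 : g 0 = 0) :
    ContinuousAt (fun s => Real.log s • g s) 0 := by
  have e : (fun s => Real.log s • g s) = fun s => (s * Real.log s) • dslope g 0 s := by
    funext s
    have := sub_smul_dslope g 0 s
    rw [sub_zero, h0, sub_zero] at this
    rw [← this, smul_smul, mul_comm]
  rw [e]
  exact Real.continuous_mul_log.continuousAt.smul (continuousAt_dslope_same.2 hg)

/-! ### Landen's trilogarithm equation along the segment `1 - s * a` -/

lemma Li_comp_continuousOn {n : ℕ} (hn : 2 ≤ n) {b : ℝ} {g : ℝ → ℂ}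
    (hg : ContinuousOn g (Icc 0 b)) (h1 : ∀ s ∈ Icc 0 b, ‖g s‖ ≤ 1) :
    ContinuousOn (fun s => Li n (g s)) (Icc 0 b) :=
  (Li_continuousOn hn).comp hg fun s hs => by simpa using h1 s hs

section Landen

variable {a : ℂ}

lemma path_re (ha : a.re = 1 / 2) (s : ℝ) : (1 - s * a).re = 1 - s / 2 := by
  simp [ha]; ring

lemma path_slit (ha : a.re = 1 / 2) {s : ℝ} (hs : s ≤ 1) : 1 - s * a ∈ Complex.slitPlane := by
  left; rw [path_re ha]; linarith

lemma path_ne (ha : a.re = 1 / 2) {s : ℝ} (hs : s ≤ 1) : 1 - s * a ≠ 0 :=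
  Complex.slitPlane_ne_zero (path_slit ha hs)

lemma path_normSq (ha : a.re = 1 / 2) (s : ℝ) :
    ‖1 - s * a‖ ^ 2 = 1 - s + ‖s * a‖ ^ 2 := by
  rw [Complex.sq_norm, Complex.sq_norm, Complex.normSq_apply, Complex.normSq_apply]
  simp [ha]; ring

lemma path_norm_sub (ha1 : ‖a‖ < 1) {s : ℝ} (h0 : 0 < s) : ‖s * a‖ < s := by
  rw [norm_mul, Complex.norm_real, Real.norm_of_nonneg h0.le]; nlinarith

lemma path_norm (ha : a.re = 1 / 2) (ha1 : ‖a‖ < 1) {s : ℝ} (h0 : 0 < s) (h1 : s ≤ 1) :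
    ‖1 - s * a‖ < 1 := by
  have h := path_normSq ha s
  have h' := path_norm_sub ha1 h0
  have : ‖s * a‖ ^ 2 < s ^ 2 := by gcongr
  nlinarith [norm_nonneg (1 - s * a)]

lemma path_norm_inv (ha : a.re = 1 / 2) {s : ℝ} (h1 : s < 1) :
    ‖-(s * a) / (1 - s * a)‖ < 1 := by
  rw [norm_div, norm_neg, div_lt_one (norm_pos_iff.2 (path_ne ha h1.le))]
  refine lt_of_pow_lt_pow_left₀ 2 (norm_nonneg _) ?_
  rw [path_normSq ha]; linarith

lemma path_norm_inv_le (ha : a.re = 1 / 2) {s : ℝ} (h1 : s ≤ 1) :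
    ‖-(s * a) / (1 - s * a)‖ ≤ 1 := by
  rw [norm_div, norm_neg, div_le_one (norm_pos_iff.2 (path_ne ha h1))]
  refine le_of_sq_le_sq ?_ (norm_nonneg _)
  rw [path_normSq ha]; linarith

lemma path_norm_le (ha : a.re = 1 / 2) (ha1 : ‖a‖ < 1) {s : ℝ} (h0 : 0 ≤ s) (h1 : s ≤ 1) :
    ‖1 - s * a‖ ≤ 1 := by
  rcases h0.eq_or_lt with rfl | h0
  · simp
  · exact (path_norm ha ha1 h0 h1).le

lemma path_norm_sub_le (ha1 : ‖a‖ < 1) {s : ℝ} (h0 : 0 ≤ s) (h1 : s ≤ 1) : ‖s * a‖ ≤ 1 := by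
  rw [norm_mul, Complex.norm_real, Real.norm_of_nonneg h0]; nlinarith

lemma hasDerivAt_ray (s : ℝ) : HasDerivAt (fun s : ℝ => (s : ℂ) * a) a s := by
  simpa using (Complex.ofRealCLM.hasDerivAt (x := s)).mul_const a

lemma hasDerivAt_path (s : ℝ) : HasDerivAt (fun s : ℝ => 1 - (s : ℂ) * a) (-a) s := by
  simpa using (hasDerivAt_ray (a := a) s).const_sub 1

lemma hasDerivAt_landenArg (ha : a.re = 1 / 2) {s : ℝ} (h1 : s ≤ 1) :
    HasDerivAt (fun s : ℝ => -((s : ℂ) * a) / (1 - s * a)) (-a / (1 - s * a) ^ 2) s := by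
  refine ((hasDerivAt_ray s).neg.div (hasDerivAt_path s) (path_ne ha h1)).congr_deriv ?_
  simp only [Pi.neg_apply]
  congr 1; ring

lemma hasDerivAt_log_path (ha : a.re = 1 / 2) {s : ℝ} (h1 : s ≤ 1) :
    HasDerivAt (fun s : ℝ => Complex.log (1 - s * a)) (-a / (1 - s * a)) s :=
  (hasDerivAt_path s).clog_real (path_slit ha h1)

lemma hasDerivAt_log_coe {s : ℝ} (h0 : s ≠ 0) :
    HasDerivAt (fun s : ℝ => ((Real.log s : ℝ) : ℂ)) ((s : ℂ)⁻¹) s := by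
  simpa using (Real.hasDerivAt_log h0).ofReal_comp

lemma a_ne (ha : a.re = 1 / 2) : a ≠ 0 := by rintro rfl; norm_num at ha

/-- The first factor vanishes at `s = 0`, so the product tends to `0` there, which is also its value
with the junk value `Real.log 0 = 0`. -/
lemma log_mul_log_continuousOn (ha : a.re = 1 / 2) :
    ContinuousOn (fun s : ℝ => Complex.log (1 - s * a) * ((Real.log s : ℝ) + Complex.log a))
      (Icc 0 1) := by
  intro s hs
  refine ContinuousAt.continuousWithinAt ?_
  have hd := hasDerivAt_log_path ha hs.2
  simp only [mul_add]
  refine ContinuousAt.add ?_ (hd.continuousAt.mul continuousAt_const)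
  rcases hs.1.eq_or_lt with rfl | h0
  · refine (log_smul_continuousAt hd.differentiableAt (by simp)).congr (.of_forall fun s => ?_)
    simp [mul_comm]
  · exact hd.continuousAt.mul (hasDerivAt_log_coe h0.ne').continuousAt

lemma cont_log (ha : a.re = 1 / 2) : ContinuousOn (fun s : ℝ => Complex.log (1 - s * a)) (Icc 0 1) :=
  fun _ hs => (hasDerivAt_log_path ha hs.2).continuousAt.continuousWithinAt

lemma cont_Li_sub (ha1 : ‖a‖ < 1) {n : ℕ} (hn : 2 ≤ n) :
    ContinuousOn (fun s : ℝ => Li n (s * a)) (Icc 0 1) :=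
  Li_comp_continuousOn hn (by fun_prop) fun _ hs => path_norm_sub_le ha1 hs.1 hs.2

lemma cont_Li_path (ha : a.re = 1 / 2) (ha1 : ‖a‖ < 1) {n : ℕ} (hn : 2 ≤ n) :
    ContinuousOn (fun s : ℝ => Li n (1 - s * a)) (Icc 0 1) :=
  Li_comp_continuousOn hn (by fun_prop) fun _ hs => path_norm_le ha ha1 hs.1 hs.2

lemma cont_Li_inv (ha : a.re = 1 / 2) {n : ℕ} (hn : 2 ≤ n) :
    ContinuousOn (fun s : ℝ => Li n (-(s * a) / (1 - s * a))) (Icc 0 1) :=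
  Li_comp_continuousOn hn
    (fun _ hs => (hasDerivAt_landenArg ha hs.2).continuousAt.continuousWithinAt)
    fun _ hs => path_norm_inv_le ha hs.2

lemma hasDerivAt_Li_sub (ha : a.re = 1 / 2) (ha1 : ‖a‖ < 1) (n : ℕ) {s : ℝ} (hs : s ∈ Ioo (0 : ℝ) 1) :
    HasDerivAt (fun s : ℝ => Li (n + 1) (s * a)) (Li n (s * a) * (s : ℂ)⁻¹) s := by
  have hsC : (s : ℂ) ≠ 0 := by exact_mod_cast hs.1.ne'
  refine (Li_comp_hasDerivAt n (hasDerivAt_ray s) ((path_norm_sub ha1 hs.1).trans hs.2)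
    (mul_ne_zero hsC (a_ne ha))).congr_deriv ?_
  field_simp [a_ne ha]

lemma hasDerivAt_Li_path (ha : a.re = 1 / 2) (ha1 : ‖a‖ < 1) (n : ℕ) {s : ℝ} (hs : s ∈ Ioo (0 : ℝ) 1) :
    HasDerivAt (fun s : ℝ => Li (n + 1) (1 - s * a)) (Li n (1 - s * a) * (-a / (1 - s * a))) s :=
  Li_comp_hasDerivAt n (hasDerivAt_path s) (path_norm ha ha1 hs.1 hs.2.le) (path_ne ha hs.2.le)

lemma hasDerivAt_Li_inv (ha : a.re = 1 / 2) (n : ℕ) {s : ℝ} (hs : s ∈ Ioo (0 : ℝ) 1) :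
    HasDerivAt (fun s : ℝ => Li (n + 1) (-(s * a) / (1 - s * a)))
      (Li n (-(s * a) / (1 - s * a)) * ((s : ℂ)⁻¹ + a / (1 - s * a))) s := by
  have hsC : (s : ℂ) ≠ 0 := by exact_mod_cast hs.1.ne'
  have hz := path_ne ha hs.2.le
  have ha0 := a_ne ha
  refine (Li_comp_hasDerivAt n (hasDerivAt_landenArg ha hs.2.le) (path_norm_inv ha hs.2)
    (div_ne_zero (neg_ne_zero.2 (mul_ne_zero hsC ha0)) hz)).congr_deriv ?_
  congr 1
  obtain ⟨z, hzd⟩ : ∃ z, z = 1 - (s : ℂ) * a := ⟨_, rfl⟩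
  rw [← hzd] at hz ⊢
  field_simp
  rw [hzd]
  ring

lemma Li_one_sub (ha1 : ‖a‖ < 1) {s : ℝ} (hs : s ∈ Ioo (0 : ℝ) 1) :
    Li 1 (s * a) = -Complex.log (1 - s * a) :=
  Li_one ((path_norm_sub ha1 hs.1).trans hs.2)

lemma Li_one_path (ha : a.re = 1 / 2) (ha1 : ‖a‖ < 1) {s : ℝ} (hs : s ∈ Ioo (0 : ℝ) 1) :
    Li 1 (1 - s * a) = -((Real.log s : ℝ) + Complex.log a) := by
  rw [Li_one (path_norm ha ha1 hs.1 hs.2.le), sub_sub_cancel,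
    Complex.log_ofReal_mul hs.1 (a_ne ha)]

lemma Li_one_inv (ha : a.re = 1 / 2) {s : ℝ} (hs : s ∈ Ioo (0 : ℝ) 1) :
    Li 1 (-(s * a) / (1 - s * a)) = Complex.log (1 - s * a) := by
  have hz := path_ne ha hs.2.le
  have e : 1 - -(s * a) / (1 - s * a) = (1 - s * a)⁻¹ := by field_simp; ring
  rw [Li_one (path_norm_inv ha hs.2), e,
    Complex.log_inv _ (Complex.slitPlane_arg_ne_pi (path_slit ha hs.2.le)), neg_neg]

/-- Landen's dilogarithm equation. The hypotheses on `a` keep `s * a` and `-(s * a) / (1 - s * a)` in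
the closed unit disc for all `s ∈ [0, 1]`. -/
lemma dilog_landen (ha : a.re = 1 / 2) (ha1 : ‖a‖ < 1) {s : ℝ} (hs : s ∈ Icc (0 : ℝ) 1) :
    Li 2 (s * a) + Li 2 (-(s * a) / (1 - s * a)) + Complex.log (1 - s * a) ^ 2 / 2 = 0 := by
  have := eq_of_deriv_zero (b := 1) one_pos
    (f := fun s : ℝ => Li 2 (s * a) + Li 2 (-(s * a) / (1 - s * a))
      + Complex.log (1 - s * a) ^ 2 / 2)
    (((cont_Li_sub ha1 le_rfl).add (cont_Li_inv ha le_rfl)).add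
      (((cont_log ha).pow 2).div_const 2)) ?_ s hs
  · simpa [Li_at_zero] using this
  intro s hs
  refine (((hasDerivAt_Li_sub ha ha1 1 hs).add (hasDerivAt_Li_inv ha 1 hs)).add
    (((hasDerivAt_log_path ha hs.2.le).pow 2).div_const 2)).congr_deriv ?_
  rw [Li_one_sub ha1 hs, Li_one_inv ha hs]
  push_cast
  ring

/-- Euler's reflection of the dilogarithm, with `log (s * a)` written as `log s + log a` so that
the expression is continuous up to `s = 0`. -/
lemma dilog_reflection (ha : a.re = 1 / 2) (ha1 : ‖a‖ < 1) {s : ℝ} (hs : s ∈ Icc (0 : ℝ) 1) :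
    Li 2 (1 - s * a) + Li 2 (s * a)
      + Complex.log (1 - s * a) * ((Real.log s : ℝ) + Complex.log a) = (Real.pi : ℂ) ^ 2 / 6 := by
  have := eq_of_deriv_zero (b := 1) one_pos
    (f := fun s : ℝ => Li 2 (1 - s * a) + Li 2 (s * a)
      + Complex.log (1 - s * a) * ((Real.log s : ℝ) + Complex.log a))
    (((cont_Li_path ha ha1 le_rfl).add (cont_Li_sub ha1 le_rfl)).add
      (log_mul_log_continuousOn ha)) ?_ s hs
  · simpa [Li_at_zero, Li_two_one] using this
  intro s hs
  refine (((hasDerivAt_Li_path ha ha1 1 hs).add (hasDerivAt_Li_sub ha ha1 1 hs)).add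
    ((hasDerivAt_log_path ha hs.2.le).mul
      ((hasDerivAt_log_coe hs.1.ne').add_const (Complex.log a)))).congr_deriv ?_
  rw [Li_one_path ha ha1 hs, Li_one_sub ha1 hs]
  ring

/-- Landen's three-term trilogarithm equation. Its derivative is a combination of `dilog_landen` and
`dilog_reflection`. -/
lemma trilog_landen (ha : a.re = 1 / 2) (ha1 : ‖a‖ < 1) {s : ℝ} (hs : s ∈ Icc (0 : ℝ) 1) :
    Li 3 (1 - s * a) + Li 3 (s * a) + Li 3 (-(s * a) / (1 - s * a))
      - Complex.log (1 - s * a) ^ 3 / 6 - (Real.pi : ℂ) ^ 2 / 6 * Complex.log (1 - s * a)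
      + Complex.log (1 - s * a) / 2 *
        (Complex.log (1 - s * a) * ((Real.log s : ℝ) + Complex.log a)) = zeta3 := by
  have := eq_of_deriv_zero (b := 1) one_pos
    (f := fun s : ℝ => Li 3 (1 - s * a) + Li 3 (s * a) + Li 3 (-(s * a) / (1 - s * a))
      - Complex.log (1 - s * a) ^ 3 / 6 - (Real.pi : ℂ) ^ 2 / 6 * Complex.log (1 - s * a)
      + Complex.log (1 - s * a) / 2 *
        (Complex.log (1 - s * a) * ((Real.log s : ℝ) + Complex.log a)))
    ((((((cont_Li_path ha ha1 (by norm_num)).add (cont_Li_sub ha1 (by norm_num))).add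
      (cont_Li_inv ha (by norm_num))).sub (((cont_log ha).pow 3).div_const 6)).sub
      ((cont_log ha).const_mul _)).add
      (((cont_log ha).div_const 2).mul (log_mul_log_continuousOn ha))) ?_ s hs
  · simpa [Li_at_zero, Li_three_one] using this
  intro s hs
  have hl := hasDerivAt_log_path ha hs.2.le
  refine ((((((hasDerivAt_Li_path ha ha1 2 hs).add (hasDerivAt_Li_sub ha ha1 2 hs)).add
    (hasDerivAt_Li_inv ha 2 hs)).sub ((hl.pow 3).div_const 6)).sub
    (hl.const_mul ((Real.pi : ℂ) ^ 2 / 6))).add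
    ((hl.div_const 2).mul (hl.mul
      ((hasDerivAt_log_coe hs.1.ne').add_const (Complex.log a))))).congr_deriv ?_
  have h1 := dilog_landen ha ha1 (Ioo_subset_Icc_self hs)
  have h2 := dilog_reflection ha ha1 (Ioo_subset_Icc_self hs)
  simp only [Pi.mul_apply]
  push_cast
  linear_combination ((s : ℂ)⁻¹ + a / (1 - s * a)) * h1 - a / (1 - s * a) * h2

end Landen

/-! ### Special values -/

lemma Li_three_neg_one : Li 3 (-1) = -(3 / 4) * zeta3 := by
  have h := Li_dup (n := 3) (by norm_num) (z := 1) (by simp)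
  rw [one_pow, Li_three_one] at h
  linear_combination h

lemma Li_two_neg_one : Li 2 (-1) = -(Real.pi : ℂ) ^ 2 / 12 := by
  have h := Li_dup (n := 2) (by norm_num) (z := 1) (by simp)
  rw [one_pow, Li_two_one] at h
  linear_combination h

lemma conj_two : starRingEnd ℂ 2 = 2 := map_ofNat _ 2

lemma Li_re_I {n : ℕ} (hn : 2 ≤ n) {y : ℝ} (hy : |y| ≤ 1) :
    2 * (Li n (I * y)).re = 2 / 2 ^ n * (Li n (-(y : ℂ) ^ 2)).re := by
  have h := Li_dup hn (z := I * y) (by simpa using hy)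
  have e : -(I * (y : ℂ)) = starRingEnd ℂ (I * y) := by simp
  have e2 : (I * (y : ℂ)) ^ 2 = -(y : ℂ) ^ 2 := by rw [mul_pow, I_sq]; ring
  have e3 : (2 / 2 ^ n : ℂ) = ((2 / 2 ^ n : ℝ) : ℂ) := by push_cast; rfl
  rw [e, e2, e3] at h
  have h' := congrArg Complex.re h
  rw [Complex.add_re, Li_conj_re, Complex.re_ofReal_mul] at h'
  linarith

lemma Li_three_I_re : (Li 3 I).re = -(3 / 32) * zeta3 := by
  have h := Li_re_I (n := 3) (by norm_num) (y := 1) (by simp)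
  simp [Li_three_neg_one] at h
  linarith

lemma Li_two_I_re : (Li 2 I).re = -Real.pi ^ 2 / 48 := by
  have h := Li_re_I (n := 2) (by norm_num) (y := 1) (by simp)
  have e : (-(Real.pi : ℂ) ^ 2 / 12).re = -Real.pi ^ 2 / 12 := by
    rw [← Complex.ofReal_re (-Real.pi ^ 2 / 12)]; push_cast; rfl
  simp only [Complex.ofReal_one, mul_one, one_pow, Li_two_neg_one, e] at h
  linarith

lemma Li_three_half_re :
    (Li 3 (1 / 2)).re = 7 / 8 * zeta3 - Real.pi ^ 2 / 12 * Real.log 2 + Real.log 2 ^ 3 / 6 := by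
  have h := trilog_landen (a := 1 / 2) (by norm_num) (by norm_num) (s := 1) (by simp)
  have e1 : (1 : ℂ) - ((1 : ℝ) : ℂ) * (1 / 2) = 1 / 2 := by push_cast; norm_num
  have e2 : ((1 : ℝ) : ℂ) * (1 / 2) = 1 / 2 := by simp
  have e3 : Complex.log (1 / 2) = ((-Real.log 2 : ℝ) : ℂ) := by
    rw [← Real.log_inv, Complex.ofReal_log (by norm_num)]; push_cast; norm_num
  have e4 : -(1 / 2 : ℂ) / (1 / 2) = -1 := by norm_num
  rw [e1, e2, e3, e4, Li_three_neg_one, Real.log_one] at h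
  have h' : Li 3 (1 / 2) = ((7 / 8 * zeta3 - Real.pi ^ 2 / 12 * Real.log 2
      + Real.log 2 ^ 3 / 6 : ℝ) : ℂ) := by
    push_cast at h ⊢
    linear_combination h / 2
  rw [h', Complex.ofReal_re]

/-- The points `(1 ± I) / 2` have modulus `1 / √2` and argument `± π / 4`. -/
lemma log_half_one_add_I (σ : ℝ) (hσ : σ = 1 ∨ σ = -1) :
    Complex.log ((1 + σ * I) / 2) = ((-(Real.log 2 / 2) : ℝ) : ℂ) + ((σ * Real.pi / 4 : ℝ) : ℂ) * I := by
  have hpi := Real.pi_pos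
  have hr : Real.exp (-(Real.log 2 / 2)) * (√2 / 2) = 1 / 2 := by
    rw [Real.exp_neg, Real.exp_half, Real.exp_log two_pos]
    field_simp
  have hc : Real.cos (σ * Real.pi / 4) = √2 / 2 := by
    rcases hσ with rfl | rfl
    · simp
    · rw [neg_one_mul, neg_div, Real.cos_neg, Real.cos_pi_div_four]
  have hs : Real.sin (σ * Real.pi / 4) = σ * (√2 / 2) := by
    rcases hσ with rfl | rfl
    · simp
    · rw [neg_one_mul, neg_div, Real.sin_neg, Real.sin_pi_div_four]; ring
  have him : (((-(Real.log 2 / 2) : ℝ) : ℂ) + ((σ * Real.pi / 4 : ℝ) : ℂ) * I).im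
      = σ * Real.pi / 4 := by
    simp only [Complex.add_im, Complex.ofReal_im, Complex.mul_im, Complex.ofReal_re,
      Complex.I_re, Complex.I_im]
    ring
  rw [← Complex.log_exp (x := ((-(Real.log 2 / 2) : ℝ) : ℂ) + ((σ * Real.pi / 4 : ℝ) : ℂ) * I)]
  · congr 1
    rw [Complex.exp_add, Complex.exp_mul_I, ← Complex.ofReal_exp, ← Complex.ofReal_cos,
      ← Complex.ofReal_sin, hc, hs]
    have hr' := congrArg (fun x : ℝ => (x : ℂ)) hr
    push_cast at hr' ⊢
    linear_combination (-1 - σ * I) * hr'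
  · rw [him]; rcases hσ with rfl | rfl <;> linarith
  · rw [him]; rcases hσ with rfl | rfl <;> linarith

/-- Landen's equation at `a = (1 - I) / 2`: the points `1 - a` and `a` are conjugate, and the third
argument is `I`. -/
lemma Li_three_u_re :
    (Li 3 ((1 + I) / 2)).re = 35 / 64 * zeta3 - 5 * Real.pi ^ 2 / 192 * Real.log 2
      + Real.log 2 ^ 3 / 48 := by
  have hn : ‖(1 - I) / 2‖ < 1 := by
    refine lt_of_pow_lt_pow_left₀ 2 zero_le_one ?_
    rw [Complex.sq_norm, Complex.normSq_apply]; norm_num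
  have h := trilog_landen (a := (1 - I) / 2) (by simp) hn (s := 1) (by simp)
  have e1 : (1 : ℂ) - ((1 : ℝ) : ℂ) * ((1 - I) / 2) = (1 + I) / 2 := by push_cast; ring
  have e2 : ((1 : ℝ) : ℂ) * ((1 - I) / 2) = (1 - I) / 2 := by simp
  have e3 := log_half_one_add_I 1 (.inl rfl)
  have e3' := log_half_one_add_I (-1) (.inr rfl)
  have e4 : -((1 - I) / 2) / ((1 + I) / 2) = I := by
    have : (1 + I) / 2 ≠ 0 := fun h => by simpa using congrArg Complex.re h
    rw [div_eq_iff this]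
    linear_combination (-1 / 2 : ℂ) * I_sq
  have e5 : (1 - I) / 2 = starRingEnd ℂ ((1 + I) / 2) := by
    apply Complex.ext <;> simp [conj_two]
  have e6 : (1 + ((1 : ℝ) : ℂ) * I) / 2 = (1 + I) / 2 := by simp
  have e7 : (1 + ((-1 : ℝ) : ℂ) * I) / 2 = (1 - I) / 2 := by push_cast; ring
  rw [e6] at e3
  rw [e7] at e3'
  rw [e1, e2, e4, e3, e3', Real.log_one] at h
  have h' := congrArg Complex.re h
  have e8 : (Li 3 ((1 - I) / 2)).re = (Li 3 ((1 + I) / 2)).re := by rw [e5, Li_conj_re]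
  generalize Li 3 ((1 + I) / 2) = A at *
  generalize Li 3 ((1 - I) / 2) = B at *
  have e9 := Li_three_I_re
  generalize Li 3 I = C at *
  generalize Real.log 2 = L at *
  simp [pow_succ] at h'
  ring_nf at h' ⊢
  linarith

/-! ### The one-parameter equation -/

/-- Real part of the polylogarithm at the point `c * r` of the ray through `c`. -/
noncomputable def rayLi (n : ℕ) (c : ℂ) (r : ℝ) : ℝ := (Li n (c * r)).re

lemma norm_ray_le {c : ℂ} {r : ℝ} (hc : ‖c‖ ≤ 1) (hr : |r| ≤ 1) : ‖c * r‖ ≤ 1 := by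
  rw [norm_mul, Complex.norm_real]
  exact mul_le_one₀ hc (norm_nonneg _) hr

lemma norm_ray_lt {c : ℂ} {r : ℝ} (hc : ‖c‖ ≤ 1) (hr : |r| < 1) : ‖c * r‖ < 1 := by
  rw [norm_mul, Complex.norm_real]
  exact (mul_le_of_le_one_left (norm_nonneg _) hc).trans_lt hr

lemma rayLi_continuousOn {n : ℕ} (hn : 2 ≤ n) {c : ℂ} (hc : ‖c‖ ≤ 1) {b : ℝ} {r : ℝ → ℝ}
    (hr : ContinuousOn r (Icc 0 b)) (h1 : ∀ s ∈ Icc 0 b, |r s| ≤ 1) :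
    ContinuousOn (fun s => rayLi n c (r s)) (Icc 0 b) :=
  Complex.continuous_re.comp_continuousOn (Li_comp_continuousOn hn
    (continuousOn_const.mul (Complex.continuous_ofReal.comp_continuousOn hr))
    fun s hs => norm_ray_le hc (h1 s hs))

lemma rayLi_hasDerivAt (n : ℕ) {c : ℂ} (hc : ‖c‖ ≤ 1) (hc0 : c ≠ 0) {r : ℝ → ℝ} {r' s : ℝ}
    (hr : HasDerivAt r r' s) (h0 : r s ≠ 0) (h1 : |r s| < 1) :
    HasDerivAt (fun s => rayLi (n + 1) c (r s)) (rayLi n c (r s) * (r' / r s)) s :=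
  Li_ray_hasDerivAt n hr hc0 h0 (norm_ray_lt hc h1)

lemma rayLi_zero (n : ℕ) (c : ℂ) : rayLi n c 0 = 0 := by simp [rayLi, Li_at_zero]

lemma rayLi_one {c : ℂ} (hc : ‖c‖ ≤ 1) {r : ℝ} (hr : |r| < 1) :
    rayLi 1 c r = -(Real.log (Complex.normSq (1 - c * r)) / 2) :=
  Li_one_re (norm_ray_lt hc hr)

lemma norm_cC : ‖(1 + I) / 2‖ ≤ 1 := by
  refine le_of_sq_le_sq ?_ zero_le_one
  rw [Complex.sq_norm, Complex.normSq_apply]; norm_num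

lemma norm_cD : ‖(I - 1) / 2‖ ≤ 1 := by
  refine le_of_sq_le_sq ?_ zero_le_one
  rw [Complex.sq_norm, Complex.normSq_apply]; norm_num

lemma cC_ne : (1 + I) / 2 ≠ 0 := fun h => by simpa using congrArg Complex.re h

lemma cD_ne : (I - 1) / 2 ≠ 0 := fun h => by simpa using congrArg Complex.re h

section ray

variable {s : ℝ}

lemma abs_rA (hs : s ∈ Icc (0 : ℝ) (1 / 2)) : |s ^ 2 / (2 * (1 - s))| < 1 := by
  have h : 0 < 1 - s := by linarith [hs.2]
  rw [abs_of_nonneg (by positivity), div_lt_one (by positivity)]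
  nlinarith [hs.1, hs.2]

lemma abs_rB (hs : s ∈ Icc (0 : ℝ) (1 / 2)) : |1 - s| ≤ 1 := by
  rw [abs_le]; constructor <;> linarith [hs.1, hs.2]

lemma abs_rB' (hs : s ∈ Ioo (0 : ℝ) (1 / 2)) : |1 - s| < 1 := by
  rw [abs_lt]; constructor <;> linarith [hs.1, hs.2]

lemma abs_rC (hs : s ∈ Icc (0 : ℝ) (1 / 2)) : |s| < 1 := by
  rw [abs_lt]; constructor <;> linarith [hs.1, hs.2]

lemma abs_rD (hs : s ∈ Icc (0 : ℝ) (1 / 2)) : |s / (1 - s)| ≤ 1 := by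
  have h : 0 < 1 - s := by linarith [hs.2]
  rw [abs_of_nonneg (div_nonneg hs.1 h.le), div_le_one h]
  linarith [hs.2]

lemma abs_rD' (hs : s ∈ Ioo (0 : ℝ) (1 / 2)) : |s / (1 - s)| < 1 := by
  have h : 0 < 1 - s := by linarith [hs.2]
  rw [abs_of_nonneg (div_nonneg hs.1.le h.le), div_lt_one h]
  linarith [hs.2]

lemma contA {n : ℕ} (hn : 2 ≤ n) :
    ContinuousOn (fun s : ℝ => rayLi n (-1) (s ^ 2 / (2 * (1 - s)))) (Icc 0 (1 / 2)) :=
  rayLi_continuousOn hn (by simp)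
    (ContinuousOn.div (by fun_prop) (by fun_prop) fun s hs => by linarith [hs.2])
    fun s hs => (abs_rA hs).le

lemma contB {n : ℕ} (hn : 2 ≤ n) {c : ℂ} (hc : ‖c‖ ≤ 1) :
    ContinuousOn (fun s : ℝ => rayLi n c (1 - s)) (Icc 0 (1 / 2)) :=
  rayLi_continuousOn hn hc (by fun_prop) fun s hs => abs_rB hs

lemma contC {n : ℕ} (hn : 2 ≤ n) :
    ContinuousOn (fun s : ℝ => rayLi n ((1 + I) / 2) s) (Icc 0 (1 / 2)) :=
  rayLi_continuousOn hn norm_cC (by fun_prop) fun s hs => (abs_rC hs).le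

lemma contD {n : ℕ} (hn : 2 ≤ n) :
    ContinuousOn (fun s : ℝ => rayLi n ((I - 1) / 2) (s / (1 - s))) (Icc 0 (1 / 2)) :=
  rayLi_continuousOn hn norm_cD
    (ContinuousOn.div (by fun_prop) (by fun_prop) fun s hs => by linarith [hs.2])
    fun s hs => abs_rD hs

lemma hasDerivAt_log_one_sub (hs : s ≤ 1 / 2) :
    HasDerivAt (fun s : ℝ => Real.log (1 - s)) (-(1 - s)⁻¹) s := by
  have h := ((hasDerivAt_id s).const_sub 1).log (by simp only [id]; linarith)
  refine h.congr_deriv ?_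
  simp only [id]; ring

lemma contT : ContinuousOn (fun s : ℝ => Real.log (1 - s)) (Icc 0 (1 / 2)) :=
  fun _ hs => (hasDerivAt_log_one_sub hs.2).continuousAt.continuousWithinAt

/-- The second factor has a simple zero at `s = 0`, so the product tends to its value `0` there. -/
lemma contTlog :
    ContinuousOn (fun s : ℝ => Real.log s * Real.log (1 - s)) (Icc 0 (1 / 2)) := by
  intro s hs
  refine ContinuousAt.continuousWithinAt ?_
  have hd := hasDerivAt_log_one_sub hs.2
  rcases hs.1.eq_or_lt with rfl | h0
  · exact log_smul_continuousAt hd.differentiableAt (by simp)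
  · exact (Real.continuousAt_log h0.ne').mul hd.continuousAt

lemma derivA (n : ℕ) (hs : s ∈ Ioo (0 : ℝ) (1 / 2)) :
    HasDerivAt (fun s : ℝ => rayLi (n + 1) (-1) (s ^ 2 / (2 * (1 - s))))
      (rayLi n (-1) (s ^ 2 / (2 * (1 - s))) * (2 * s⁻¹ + (1 - s)⁻¹)) s := by
  have h0 := hs.1
  have h : 0 < 1 - s := by linarith [hs.2]
  have hr : HasDerivAt (fun s : ℝ => s ^ 2 / (2 * (1 - s)))
      ((2 * s * (2 * (1 - s)) - s ^ 2 * (2 * -1)) / (2 * (1 - s)) ^ 2) s := by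
    refine (((hasDerivAt_pow 2 s).div (((hasDerivAt_id s).const_sub 1).const_mul 2)
      (by positivity)) :
        HasDerivAt (fun s : ℝ => s ^ 2 / (2 * (1 - s))) _ s).congr_deriv ?_
    norm_num [id]
  refine (rayLi_hasDerivAt n (by simp) (by simp) hr (by positivity)
    (abs_rA (Ioo_subset_Icc_self hs))).congr_deriv ?_
  congr 1
  field_simp
  ring

lemma derivB (n : ℕ) {c : ℂ} (hc : ‖c‖ ≤ 1) (hc0 : c ≠ 0) (hs : s ∈ Ioo (0 : ℝ) (1 / 2)) :
    HasDerivAt (fun s : ℝ => rayLi (n + 1) c (1 - s)) (rayLi n c (1 - s) * (-(1 - s)⁻¹)) s := by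
  have h : 0 < 1 - s := by linarith [hs.2]
  refine (rayLi_hasDerivAt n hc hc0 ((hasDerivAt_id s).const_sub 1) h.ne'
    (abs_rB' hs)).congr_deriv ?_
  simp only [id]; ring

lemma derivC (n : ℕ) (hs : s ∈ Ioo (0 : ℝ) (1 / 2)) :
    HasDerivAt (fun s : ℝ => rayLi (n + 1) ((1 + I) / 2) s)
      (rayLi n ((1 + I) / 2) s * s⁻¹) s := by
  refine (rayLi_hasDerivAt n norm_cC cC_ne (hasDerivAt_id s) hs.1.ne'
    (abs_rC (Ioo_subset_Icc_self hs))).congr_deriv ?_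
  simp only [id]; ring

lemma derivD (n : ℕ) (hs : s ∈ Ioo (0 : ℝ) (1 / 2)) :
    HasDerivAt (fun s : ℝ => rayLi (n + 1) ((I - 1) / 2) (s / (1 - s)))
      (rayLi n ((I - 1) / 2) (s / (1 - s)) * (s⁻¹ + (1 - s)⁻¹)) s := by
  have h0 := hs.1
  have h : 0 < 1 - s := by linarith [hs.2]
  have hr : HasDerivAt (fun s : ℝ => s / (1 - s))
      ((1 * (1 - s) - s * -1) / (1 - s) ^ 2) s :=
    (hasDerivAt_id s).div ((hasDerivAt_id s).const_sub 1) h.ne'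
  refine (rayLi_hasDerivAt n norm_cD cD_ne hr (by positivity) (abs_rD' hs)).congr_deriv ?_
  congr 1
  field_simp
  ring

/-- This and the next four lemmas factor `‖1 - z‖ ^ 2` for each argument `z` of the one-parameter
equation: only `1 + (1 - s) ^ 2`, `1 - s`, `s` and `2` occur. -/
lemma oneA (hs : s ∈ Ioo (0 : ℝ) (1 / 2)) :
    rayLi 1 (-1) (s ^ 2 / (2 * (1 - s)))
      = -(Real.log (1 + (1 - s) ^ 2) - Real.log 2 - Real.log (1 - s)) := by
  have h : 0 < 1 - s := by linarith [hs.2]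
  have e : Complex.normSq (1 - -1 * ((s ^ 2 / (2 * (1 - s)) : ℝ) : ℂ))
      = ((1 + (1 - s) ^ 2) / (2 * (1 - s))) ^ 2 := by
    rw [neg_one_mul, sub_neg_eq_add, ← Complex.ofReal_one, ← Complex.ofReal_add,
      Complex.normSq_ofReal, ← pow_two]
    congr 1
    field_simp
    ring
  rw [rayLi_one (by simp) (abs_rA (Ioo_subset_Icc_self hs)), e, Real.log_pow,
    Real.log_div (by positivity) (by positivity), Real.log_mul two_ne_zero h.ne']
  push_cast
  ring

lemma oneB (hs : s ∈ Ioo (0 : ℝ) (1 / 2)) :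
    rayLi 1 I (1 - s) = -(Real.log (1 + (1 - s) ^ 2) / 2) := by
  have e : Complex.normSq (1 - I * ((1 - s : ℝ) : ℂ)) = 1 + (1 - s) ^ 2 := by
    rw [Complex.normSq_apply]; simp; ring
  rw [rayLi_one (by simp) (abs_rB' hs), e]

lemma oneC (hs : s ∈ Ioo (0 : ℝ) (1 / 2)) :
    rayLi 1 ((1 + I) / 2) s = -((Real.log (1 + (1 - s) ^ 2) - Real.log 2) / 2) := by
  have e : Complex.normSq (1 - (1 + I) / 2 * (s : ℂ)) = (1 + (1 - s) ^ 2) / 2 := by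
    rw [Complex.normSq_apply]; simp; ring
  rw [rayLi_one norm_cC (abs_rC (Ioo_subset_Icc_self hs)), e,
    Real.log_div (by positivity) two_ne_zero]

lemma oneD (hs : s ∈ Ioo (0 : ℝ) (1 / 2)) :
    rayLi 1 ((I - 1) / 2) (s / (1 - s))
      = -((Real.log (1 + (1 - s) ^ 2) - Real.log 2 - 2 * Real.log (1 - s)) / 2) := by
  have h : 0 < 1 - s := by linarith [hs.2]
  have e : Complex.normSq (1 - (I - 1) / 2 * ((s / (1 - s) : ℝ) : ℂ))
      = (1 + (1 - s) ^ 2) / (2 * (1 - s) ^ 2) := by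
    rw [Complex.normSq_apply]
    simp only [Complex.sub_re, Complex.sub_im, Complex.re_mul_ofReal, Complex.im_mul_ofReal]
    simp
    field_simp
    ring
  rw [rayLi_one norm_cD (abs_rD' hs), e, Real.log_div (by positivity) (by positivity),
    Real.log_mul two_ne_zero (by positivity), Real.log_pow]
  push_cast
  ring

lemma oneE (hs : s ∈ Ioo (0 : ℝ) (1 / 2)) : rayLi 1 1 (1 - s) = -Real.log s := by
  have e : Complex.normSq (1 - 1 * ((1 - s : ℝ) : ℂ)) = s ^ 2 := by
    rw [Complex.normSq_apply]; simp; ring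
  rw [rayLi_one (by simp) (abs_rB' hs), e, Real.log_pow]
  push_cast
  ring

/-- The coefficient of `-1 / s` in the derivative of the left side of `trilog_eq`. -/
lemma dilog_eq_one (hs : s ∈ Icc (0 : ℝ) (1 / 2)) :
    -2 * rayLi 2 (-1) (s ^ 2 / (2 * (1 - s))) + 4 * rayLi 2 ((1 + I) / 2) s
      + 4 * rayLi 2 ((I - 1) / 2) (s / (1 - s)) + Real.log (1 - s) ^ 2 = 0 := by
  have := eq_of_deriv_zero (b := 1 / 2) (by norm_num)
    (f := fun s : ℝ => -2 * rayLi 2 (-1) (s ^ 2 / (2 * (1 - s))) + 4 * rayLi 2 ((1 + I) / 2) s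
      + 4 * rayLi 2 ((I - 1) / 2) (s / (1 - s)) + Real.log (1 - s) ^ 2)
    (((((contA le_rfl).const_mul _).add ((contC le_rfl).const_mul _)).add
      ((contD le_rfl).const_mul _)).add (contT.pow 2)) ?_ s hs
  · simpa [rayLi_zero] using this
  intro s hs
  refine (((((derivA 1 hs).const_mul (-2)).add ((derivC 1 hs).const_mul 4)).add
    ((derivD 1 hs).const_mul 4)).add ((hasDerivAt_log_one_sub hs.2.le).pow 2)).congr_deriv ?_
  rw [oneA hs, oneC hs, oneD hs]
  push_cast
  ring

/-- The coefficient of `-1 / (1 - s)` in the derivative of the left side of `trilog_eq`, up to a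
constant fixed by `s = 0`. -/
lemma dilog_eq_two (hs : s ∈ Icc (0 : ℝ) (1 / 2)) :
    -rayLi 2 (-1) (s ^ 2 / (2 * (1 - s))) + 2 * rayLi 2 I (1 - s)
      + 4 * rayLi 2 ((I - 1) / 2) (s / (1 - s)) - 2 * rayLi 2 1 (1 - s)
      - 2 * (Real.log s * Real.log (1 - s)) + 3 / 2 * Real.log (1 - s) ^ 2
      + Real.log 2 * Real.log (1 - s) = -(3 / 8) * Real.pi ^ 2 := by
  have := eq_of_deriv_zero (b := 1 / 2) (by norm_num)
    (f := fun s : ℝ => -rayLi 2 (-1) (s ^ 2 / (2 * (1 - s))) + 2 * rayLi 2 I (1 - s)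
      + 4 * rayLi 2 ((I - 1) / 2) (s / (1 - s)) - 2 * rayLi 2 1 (1 - s)
      - 2 * (Real.log s * Real.log (1 - s)) + 3 / 2 * Real.log (1 - s) ^ 2
      + Real.log 2 * Real.log (1 - s))
    (((((((contA le_rfl).neg.add ((contB le_rfl (by simp)).const_mul _)).add
      ((contD le_rfl).const_mul _)).sub ((contB le_rfl (by simp)).const_mul _)).sub
      (contTlog.const_mul _)).add ((contT.pow 2).const_mul _)).add (contT.const_mul _)) ?_ s hs
  · have e : (Li 2 1).re = Real.pi ^ 2 / 6 := by
      rw [Li_two_one, ← Complex.ofReal_re (Real.pi ^ 2 / 6)]; push_cast; rfl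
    have e1 : rayLi 2 1 1 = Real.pi ^ 2 / 6 := by simp [rayLi, e]
    have e2 : rayLi 2 I 1 = -Real.pi ^ 2 / 48 := by simp [rayLi, Li_two_I_re]
    refine this.trans ?_
    norm_num [rayLi_zero, e1, e2]
    ring
  intro s hs
  have hT := hasDerivAt_log_one_sub hs.2.le
  refine ((((((((derivA 1 hs).neg.add ((derivB 1 (by simp) I_ne_zero hs).const_mul 2)).add
    ((derivD 1 hs).const_mul 4)).sub
    ((derivB 1 (by simp) one_ne_zero hs).const_mul 2)).sub
    (((Real.hasDerivAt_log hs.1.ne').mul hT).const_mul 2)).add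
    ((hT.pow 2).const_mul (3 / 2))).add (hT.const_mul (Real.log 2)))).congr_deriv ?_
  rw [oneA hs, oneB hs, oneD hs, oneE hs]
  push_cast
  ring

/-- Kummer's trilogarithm equation at the points `I` and `1 - s`, real parts. -/
lemma trilog_eq (hs : s ∈ Icc (0 : ℝ) (1 / 2)) :
    rayLi 3 (-1) (s ^ 2 / (2 * (1 - s))) + 2 * rayLi 3 I (1 - s)
      - 4 * rayLi 3 ((1 + I) / 2) s - 4 * rayLi 3 ((I - 1) / 2) (s / (1 - s))
      - 2 * rayLi 3 1 (1 - s) - Real.log (1 - s) * (Real.log s * Real.log (1 - s))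
      + 1 / 2 * Real.log (1 - s) ^ 3 + Real.log 2 / 2 * Real.log (1 - s) ^ 2
      + 3 / 8 * Real.pi ^ 2 * Real.log (1 - s) = -(35 / 16) * zeta3 := by
  have h3 : 2 ≤ 3 := by norm_num
  have := eq_of_deriv_zero (b := 1 / 2) (by norm_num)
    (f := fun s : ℝ => rayLi 3 (-1) (s ^ 2 / (2 * (1 - s))) + 2 * rayLi 3 I (1 - s)
      - 4 * rayLi 3 ((1 + I) / 2) s - 4 * rayLi 3 ((I - 1) / 2) (s / (1 - s))
      - 2 * rayLi 3 1 (1 - s) - Real.log (1 - s) * (Real.log s * Real.log (1 - s))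
      + 1 / 2 * Real.log (1 - s) ^ 3 + Real.log 2 / 2 * Real.log (1 - s) ^ 2
      + 3 / 8 * Real.pi ^ 2 * Real.log (1 - s))
    (((((((((contA h3).add ((contB h3 (by simp)).const_mul _)).sub
      ((contC h3).const_mul _)).sub ((contD h3).const_mul _)).sub
      ((contB h3 (by simp)).const_mul _)).sub (contT.mul contTlog)).add
      ((contT.pow 3).const_mul _)).add ((contT.pow 2).const_mul _)).add
      (contT.const_mul _)) ?_ s hs
  · have e1 : rayLi 3 1 1 = zeta3 := by simp [rayLi, Li_three_one]
    have e2 : rayLi 3 I 1 = -(3 / 32) * zeta3 := by simp [rayLi, Li_three_I_re]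
    refine this.trans ?_
    norm_num [rayLi_zero, e1, e2]
    ring
  intro s hs
  have hT := hasDerivAt_log_one_sub hs.2.le
  refine (((((((((derivA 2 hs).add ((derivB 2 (by simp) I_ne_zero hs).const_mul 2)).sub
    ((derivC 2 hs).const_mul 4)).sub ((derivD 2 hs).const_mul 4)).sub
    ((derivB 2 (by simp) one_ne_zero hs).const_mul 2)).sub
    (hT.mul ((Real.hasDerivAt_log hs.1.ne').mul hT))).add
    ((hT.pow 3).const_mul (1 / 2))).add ((hT.pow 2).const_mul (Real.log 2 / 2))).add
    (hT.const_mul (3 / 8 * Real.pi ^ 2))).congr_deriv ?_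
  simp only [Pi.mul_apply]
  push_cast
  linear_combination -s⁻¹ * dilog_eq_one (Ioo_subset_Icc_self hs)
    - (1 - s)⁻¹ * dilog_eq_two (Ioo_subset_Icc_self hs)

end ray

/-! ### The ladder -/

theorem trilog_ladder_D :
    (4 / 9) * (Li 3 ((1 + I) / 4)).re - (Li 3 (-I / 2)).re =
      (7 / 24) * zeta3 + Real.log 2 ^ 3 / 12 - 5 * Real.pi ^ 2 * Real.log 2 / 144 := by
  have h := trilog_eq (s := 1 / 2) (by norm_num)
  -- At `s = 1 / 2` the arguments are `-1/4`, `I/2`, `(1+I)/4`, `(I-1)/2` and `1/2`; the duplication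
  -- equation turns the first and the fourth into `Li 3 (I/2)` and `Li 3 ((1+I)/2)`.
  have hl : Real.log (1 - 1 / 2) = -Real.log 2 := by rw [← Real.log_inv]; norm_num
  have hl' : Real.log (1 / 2) = -Real.log 2 := by rw [← Real.log_inv]; norm_num
  have hX : (Li 3 (-I / 2)).re = (Li 3 (I * ((1 / 2 : ℝ) : ℂ))).re := by
    rw [← Li_conj_re]; congr 2
    apply Complex.ext <;> simp [conj_two]
  have hA : rayLi 3 (-1) ((1 / 2) ^ 2 / (2 * (1 - 1 / 2))) = 8 * (Li 3 (-I / 2)).re := by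
    have h2 := Li_re_I (n := 3) (by norm_num) (y := 1 / 2) (by rw [abs_of_pos] <;> norm_num)
    rw [← hX] at h2
    have e : rayLi 3 (-1) ((1 / 2) ^ 2 / (2 * (1 - 1 / 2)))
        = (Li 3 (-(((1 / 2 : ℝ) : ℂ)) ^ 2)).re := by
      rw [rayLi]; congr 2; push_cast; norm_num
    rw [e]; linarith
  have hB : rayLi 3 I (1 - 1 / 2) = (Li 3 (-I / 2)).re := by
    rw [hX, rayLi]; congr 2; push_cast; norm_num
  have hC : rayLi 3 ((1 + I) / 2) (1 / 2) = (Li 3 ((1 + I) / 4)).re := by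
    rw [rayLi]; congr 2; push_cast; ring
  have hD : rayLi 3 ((I - 1) / 2) (1 / 2 / (1 - 1 / 2))
      = (Li 3 (-I / 2)).re / 4 - (Li 3 ((1 + I) / 2)).re := by
    have h2 := Li_dup (n := 3) (by norm_num) norm_cC
    have e1 : ((1 + I) / 2) ^ 2 = I * ((1 / 2 : ℝ) : ℂ) := by
      push_cast; linear_combination (1 / 4 : ℂ) * I_sq
    have e2 : (2 / 2 ^ 3 : ℂ) = ((1 / 4 : ℝ) : ℂ) := by push_cast; norm_num
    rw [e1, e2] at h2
    have h3 := congrArg Complex.re h2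
    rw [Complex.add_re, Complex.re_ofReal_mul, ← hX] at h3
    have e3 : rayLi 3 ((I - 1) / 2) (1 / 2 / (1 - 1 / 2)) = (Li 3 (-((1 + I) / 2))).re := by
      rw [← Li_conj_re, rayLi]; congr 2
      apply Complex.ext <;> norm_num [conj_two]
    rw [e3]; linarith
  have hE : rayLi 3 1 (1 - 1 / 2) = (Li 3 (1 / 2)).re := by
    rw [rayLi]; congr 2; push_cast; norm_num
  rw [hA, hB, hC, hD, hE, hl, hl', Li_three_half_re, Li_three_u_re] at h
  linear_combination (-1 / 9 : ℝ) * h
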